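/- arXiv:2409.14512 — 3 statements merged into one kernel-verified Lean document; each statement's English description precedes it below -/
import Mathlib

section
/- Let m ≥ 1 be an integer, let a, b ≥ 0 be real numbers, and let c > (m−1)/2 be real. Let κ = (k₁, …, k_m) be a nonincreasing tuple of nonnegative integers with k₁ + ⋯ + k_m ≥ 1. Then ∏_{j=1}^m (c + a − (j−1)/2)_{k_j} · ∏_{j=1}^m (c + b − (j−1)/2)_{k_j} ≥ ∏_{j=1}^m (c − (j−1)/2)_{k_j} · ∏_{j=1}^m (c + a + b − (j−1)/2)_{k_j} + (ab)^{k₁+⋯+k_m}. In other words, the partitional rising factorials satisfy (c+a)_κ (c+b)_κ ≥ (c)_κ (c+a+b)_κ + (ab)^{|κ|} for every nonzero partition κ. -/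
open Polynomial

/-!
Both sides are products over the cells `(j, i)` of the diagram of `κ`, and with
`x = c - j / 2 + i ≥ 0` the factors at a cell satisfy
`(x + a) * (x + b) = x * (x + a + b) + a * b`. Expanding the product of these binomials, all
terms are nonnegative and the two extreme ones are those on the right-hand side.
-/

theorem ascPochhammer_eval_eq_prod_range {R : Type*} [CommSemiring R] (n : ℕ) (x : R) :
    (ascPochhammer R n).eval x = ∏ i ∈ Finset.range n, (x + i) := by
  induction n with
  | zero => simp
  | succ n ih => rw [ascPochhammer_succ_eval, ih, Finset.prod_range_succ]

section OrderedCommSemiring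

variable {R ι : Type*} [CommSemiring R] [PartialOrder R] [IsOrderedRing R] {s : Finset ι}

theorem prod_mul_prod_add_add_prod_mul_le {x a b : ι → R} (hs : s.Nonempty)
    (hx : ∀ j ∈ s, 0 ≤ x j) (ha : ∀ j ∈ s, 0 ≤ a j) (hb : ∀ j ∈ s, 0 ≤ b j) :
    (∏ j ∈ s, x j) * (∏ j ∈ s, (x j + a j + b j)) + ∏ j ∈ s, a j * b j ≤
      (∏ j ∈ s, (x j + a j)) * ∏ j ∈ s, (x j + b j) := by
  have factor_eq (j : ι) :
      (x j + a j) * (x j + b j) = x j * (x j + a j + b j) + a j * b j := by ring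
  have hmain : ∀ j ∈ s, 0 ≤ x j * (x j + a j + b j) := fun j hj =>
    mul_nonneg (hx j hj) (add_nonneg (add_nonneg (hx j hj) (ha j hj)) (hb j hj))
  have hab : ∀ j ∈ s, 0 ≤ a j * b j := fun j hj => mul_nonneg (ha j hj) (hb j hj)
  obtain ⟨j₀, hj₀⟩ := hs
  simp only [← Finset.prod_mul_distrib, factor_eq]
  exact Finset.prod_add_prod_le hj₀ le_rfl
    (fun j hj _ => le_add_of_nonneg_right (hab j hj))
    (fun j hj _ => le_add_of_nonneg_left (hmain j hj)) hmain hab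

theorem partitional_ascFactorial_lower_bound_general {x : ι → R} {a b : R} {k : ι → ℕ}
    (hx : ∀ j ∈ s, 0 ≤ x j) (ha : 0 ≤ a) (hb : 0 ≤ b) (hk : 0 < ∑ j ∈ s, k j) :
    (∏ j ∈ s, (ascPochhammer R (k j)).eval (x j)) *
        (∏ j ∈ s, (ascPochhammer R (k j)).eval (x j + a + b)) + (a * b) ^ (∑ j ∈ s, k j) ≤
      (∏ j ∈ s, (ascPochhammer R (k j)).eval (x j + a)) *
        ∏ j ∈ s, (ascPochhammer R (k j)).eval (x j + b) := by
  let cells : Finset (Σ _ : ι, ℕ) := s.sigma fun j => Finset.range (k j)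
  have card_cells : cells.card = ∑ j ∈ s, k j := by simp [cells]
  have prod_cells (y : ι → R) :
      ∏ j ∈ s, (ascPochhammer R (k j)).eval (y j) = ∏ p ∈ cells, (y p.1 + p.2) := by
    simp only [ascPochhammer_eval_eq_prod_range, cells, Finset.prod_sigma]
  have cells_nonempty : cells.Nonempty := Finset.card_pos.mp (card_cells ▸ hk)
  have cell_nonneg : ∀ p ∈ cells, 0 ≤ x p.1 + p.2 := fun p hp =>
    add_nonneg (hx p.1 (Finset.mem_sigma.mp hp).1) (Nat.cast_nonneg _)
  simpa only [prod_cells, add_right_comm _ _ (Nat.cast _), Finset.prod_const, card_cells] using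
    prod_mul_prod_add_add_prod_mul_le cells_nonempty cell_nonneg (fun _ _ => ha) (fun _ _ => hb)

end OrderedCommSemiring

/-- For a nonzero partition `κ = (k₁, …, k_m)` (nonincreasing tuple of nonnegative
integers with `|κ| ≥ 1`), reals `a, b ≥ 0` and `c > (m−1)/2`, the partitional rising
factorials satisfy `(c+a)_κ (c+b)_κ ≥ (c)_κ (c+a+b)_κ + (ab)^{|κ|}`. -/
theorem partitional_ascFactorial_lower_bound (m : ℕ) (hm : 1 ≤ m)
    (a b c : ℝ) (ha : 0 ≤ a) (hb : 0 ≤ b) (hc : (m - 1 : ℝ) / 2 < c)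
    (k : Fin m → ℕ) (hmono : ∀ i j : Fin m, i ≤ j → k j ≤ k i)
    (hsum : 1 ≤ ∑ j, k j) :
    (∏ j : Fin m, (ascPochhammer ℝ (k j)).eval (c + a - (j : ℝ) / 2)) *
      (∏ j : Fin m, (ascPochhammer ℝ (k j)).eval (c + b - (j : ℝ) / 2)) ≥
    (∏ j : Fin m, (ascPochhammer ℝ (k j)).eval (c - (j : ℝ) / 2)) *
      (∏ j : Fin m, (ascPochhammer ℝ (k j)).eval (c + a + b - (j : ℝ) / 2)) +
      (a * b) ^ (∑ j, k j) := by
  have shift_nonneg (j : Fin m) : 0 ≤ c - (j : ℝ) / 2 := by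
    have hj : (j : ℝ) + 1 ≤ m := mod_cast j.isLt
    linarith
  simpa only [ge_iff_le, sub_add_eq_add_sub] using
    partitional_ascFactorial_lower_bound_general (fun j _ => shift_nonneg j) ha hb hsum
end

section
/- Let α > 1, and let a, b, c be real numbers with a > 0 and ab − c² > 0 (so that the 2×2 matrix [[a,c],[c,b]] is symmetric positive definite). Then for all real ν₁ > −α/2 and ν₂ > −α/2, the Lebesgue integral over D = {(x,y,z) ∈ ℝ³ : x > 0, y > 0, xy − z² > 0} satisfies ∫_D x^{ν₁} y^{ν₂} (xy − z²)^{(α−3)/2} exp(−(a x + b y + 2 c z)) d(x,y,z) = √π · Γ((α−1)/2) · (Γ(α/2 + ν₁) Γ(α/2 + ν₂) / Γ(α/2)) · b^{ν₁} a^{ν₂} (ab − c²)^{−(α/2 + ν₁ + ν₂)} · ∑_{k=0}^∞ ((−ν₁)_k (−ν₂)_k / ((α/2)_k · k!)) (c²/(ab))^k. (This is the p₁ = p₂ = 1 case of the Wishart product-of-minors moment formula E(X₁₁^{ν₁} X₂₂^{ν₂}) = E(X₁₁^{ν₁}) E(X₂₂^{ν₂}) ₂F₁(−ν₁, −ν₂;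 α/2; ρ²).) -/
open MeasureTheory Polynomial Real
open Set ProbabilityTheory
open Finset.HasAntidiagonal (antidiagonal mem_antidiagonal)
open scoped ENNReal Nat

/-!
Integrate out `z` first: only the even part of `exp (-2cz)` survives, and expanding it as a power
series reduces the `z`-integral to beta integrals and then the `x`- and `y`-integrals to gamma
integrals. All terms are nonnegative, so Tonelli in `ℝ≥0∞` justifies the exchange of sum and
integral. The result is a multiple of `₂F₁ (α/2 + ν₁) (α/2 + ν₂) (α/2) ρ²` with `ρ² = c² / (ab)`,
which Euler's transformation `₂F₁ p q r x = (1 - x) ^ (r - p - q) * ₂F₁ (r - p) (r - q) r x` turns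
into a multiple of `₂F₁ (-ν₁) (-ν₂) (α/2) ρ²`. Comparing coefficients, Euler's transformation is
the Pfaff–Saalschütz summation.
-/

/-! ### Euler's transformation of the hypergeometric series -/

section Hypergeometric

variable {𝕂 : Type*}

lemma ordinaryHypergeometricCoefficient_succ [Field 𝕂] (a b c : 𝕂) (n : ℕ) :
    ordinaryHypergeometricCoefficient a b c (n + 1) =
      (a + n) * (b + n) / ((n + 1) * (c + n)) * ordinaryHypergeometricCoefficient a b c n := by
  simp only [ordinaryHypergeometricCoefficient, ascPochhammer_succ_eval, Nat.factorial_succ,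
    Nat.cast_mul, Nat.cast_succ, mul_inv, div_eq_mul_inv]
  ring

variable [Field 𝕂] [CharZero 𝕂] {c : 𝕂}

lemma succ_mul_ordinaryHypergeometricCoefficient_succ (hc : ∀ k : ℕ, c ≠ -k) (a b : 𝕂) (n : ℕ) :
    (n + 1) * (c + n) * ordinaryHypergeometricCoefficient a b c (n + 1) =
      (a + n) * (b + n) * ordinaryHypergeometricCoefficient a b c n := by
  have hcn : c + n ≠ 0 := fun h => hc n (eq_neg_of_add_eq_zero_left h)
  rw [ordinaryHypergeometricCoefficient_succ]
  field_simp

lemma succ_mul_ordinaryHypergeometricCoefficient_self_succ (hc : ∀ k : ℕ, c ≠ -k) (e : 𝕂)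
    (n : ℕ) :
    (n + 1) * ordinaryHypergeometricCoefficient e c c (n + 1) =
      (e + n) * ordinaryHypergeometricCoefficient e c c n := by
  have hcn : c + n ≠ 0 := fun h => hc n (eq_neg_of_add_eq_zero_left h)
  rw [ordinaryHypergeometricCoefficient_succ]
  field_simp

lemma mul_sum_antidiagonal_ordinaryHypergeometricCoefficient_succ (hc : ∀ k : ℕ, c ≠ -k)
    (a b : 𝕂) (n : ℕ) :
    (n + 1) * (c + n) * ∑ p ∈ antidiagonal (n + 1),
        ordinaryHypergeometricCoefficient a b c p.1 *
          ordinaryHypergeometricCoefficient (c - a - b) c c p.2 =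
      (c - a + n) * (c - b + n) * ∑ p ∈ antidiagonal n,
        ordinaryHypergeometricCoefficient a b c p.1 *
          ordinaryHypergeometricCoefficient (c - a - b) c c p.2 := by
  set A := ordinaryHypergeometricCoefficient a b c
  set E := ordinaryHypergeometricCoefficient (c - a - b) c c
  -- Splitting the weight as `(n + 1) (c + n) = i (c + i - 1) + j (2 i + j + c - 1)` for
  -- `i + j = n + 1` lets each part be shifted down by one of the two coefficient recurrences.
  calc _ = ∑ p ∈ antidiagonal (n + 1), p.1 * (c + p.1 - 1) * A p.1 * E p.2 +
        ∑ p ∈ antidiagonal (n + 1), p.2 * E p.2 * (2 * p.1 + p.2 + c - 1) * A p.1 := by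
        rw [Finset.mul_sum, ← Finset.sum_add_distrib]
        refine Finset.sum_congr rfl fun p hp => ?_
        have hn : (p.1 + p.2 : 𝕂) = n + 1 := mod_cast mem_antidiagonal.1 hp
        rw [eq_sub_of_add_eq hn.symm]
        ring
    _ = ∑ p ∈ antidiagonal n, (p.1 + 1) * (c + p.1) * A (p.1 + 1) * E p.2 +
        ∑ p ∈ antidiagonal n, (p.2 + 1) * E (p.2 + 1) * (2 * p.1 + p.2 + c) * A p.1 := by
        rw [Finset.Nat.sum_antidiagonal_succ, Finset.Nat.sum_antidiagonal_succ']
        simp only [Nat.cast_zero, zero_mul, zero_add, Nat.cast_succ]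
        congr 1 <;> exact Finset.sum_congr rfl fun p _ => by ring
    _ = _ := by
        rw [Finset.mul_sum, ← Finset.sum_add_distrib]
        refine Finset.sum_congr rfl fun p hp => ?_
        have hn : (n : 𝕂) = p.1 + p.2 := mod_cast (mem_antidiagonal.1 hp).symm
        rw [succ_mul_ordinaryHypergeometricCoefficient_succ hc,
          succ_mul_ordinaryHypergeometricCoefficient_self_succ hc, hn]
        ring

/-- The Pfaff–Saalschütz summation, written as a convolution. -/
theorem sum_antidiagonal_ordinaryHypergeometricCoefficient (hc : ∀ k : ℕ, c ≠ -k) (a b : 𝕂)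
    (n : ℕ) :
    ∑ p ∈ antidiagonal n, ordinaryHypergeometricCoefficient a b c p.1 *
        ordinaryHypergeometricCoefficient (c - a - b) c c p.2 =
      ordinaryHypergeometricCoefficient (c - a) (c - b) c n := by
  induction n with
  | zero => simp
  | succ n ih =>
    have hcn : c + n ≠ 0 := fun h => hc n (eq_neg_of_add_eq_zero_left h)
    refine mul_left_cancel₀ (mul_ne_zero n.cast_add_one_ne_zero hcn) ?_
    rw [mul_sum_antidiagonal_ordinaryHypergeometricCoefficient_succ hc, ih,
      succ_mul_ordinaryHypergeometricCoefficient_succ hc]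

end Hypergeometric

section RCLike

variable {𝕂 : Type*} [RCLike 𝕂]

theorem one_le_radius_ordinaryHypergeometricSeries (𝔸 : Type*) [NormedDivisionRing 𝔸]
    [NormedAlgebra 𝕂 𝔸] (a b c : 𝕂) :
    1 ≤ (ordinaryHypergeometricSeries 𝔸 a b c).radius := by
  by_cases! habc : ∀ k : ℕ, ↑k ≠ -a ∧ ↑k ≠ -b ∧ ↑k ≠ -c
  · exact (ordinaryHypergeometricSeries_radius_eq_one 𝔸 a b c habc).ge
  · obtain ⟨k, hk⟩ := habc
    obtain rfl | rfl | rfl : a = -k ∨ b = -k ∨ c = -k := by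
      simp only [ne_eq, eq_neg_iff_add_eq_zero, add_comm (k : 𝕂)] at hk ⊢
      tauto
    · simp [ordinaryHypergeometric_radius_top_of_neg_nat₁]
    · simp [ordinaryHypergeometric_radius_top_of_neg_nat₂]
    · simp [ordinaryHypergeometric_radius_top_of_neg_nat₃]

lemma ordinaryHypergeometric_eq_tsum_coefficient (a b c x : 𝕂) :
    ₂F₁ a b c x = ∑' n, ordinaryHypergeometricCoefficient a b c n * x ^ n := by
  rw [ordinaryHypergeometric_eq_tsum]; rfl

lemma summable_norm_ordinaryHypergeometricCoefficient_mul_pow (a b c : 𝕂) {x : 𝕂}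
    (hx : ‖x‖ < 1) : Summable fun n => ‖ordinaryHypergeometricCoefficient a b c n * x ^ n‖ := by
  have hmem : x ∈ Metric.eball 0 (ordinaryHypergeometricSeries 𝕂 a b c).radius := by
    refine Metric.eball_subset_eball (one_le_radius_ordinaryHypergeometricSeries 𝕂 a b c) ?_
    simpa [← ENNReal.ofReal_one, Metric.eball_ofReal] using hx
  refine (FormalMultilinearSeries.summable_norm_apply _ hmem).congr fun n => ?_
  rw [ordinaryHypergeometricSeries_apply_eq, smul_eq_mul]

end RCLike

theorem ordinaryHypergeometric_self_right (e : ℝ) {c x : ℝ} (hc : ∀ k : ℕ, c ≠ -k) (hx : |x| < 1) :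
    ₂F₁ e c c x = (1 - x) ^ (-e) := by
  have hball : -x ∈ Metric.eball (0 : ℝ) 1 := by
    simpa [← ENNReal.ofReal_one, Metric.eball_ofReal] using hx
  have hsum := one_add_rpow_hasFPowerSeriesOnBall_zero (a := -e) |>.sum hball
  rw [zero_add, ← sub_eq_add_neg] at hsum
  rw [hsum, binomialSeries_eq_ordinaryHypergeometricSeries (b := c)
    fun k h => hc k (neg_eq_iff_eq_neg.1 h.symm), neg_neg]
  refine tsum_congr fun n => ?_
  simp only [FormalMultilinearSeries.compContinuousLinearMap_apply]
  simp [Function.comp_def]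

theorem ordinaryHypergeometric_euler (a b : ℝ) {c x : ℝ} (hc : ∀ k : ℕ, c ≠ -k) (hx : |x| < 1) :
    ₂F₁ a b c x = (1 - x) ^ (c - a - b) * ₂F₁ (c - a) (c - b) c x := by
  have hconv : ₂F₁ (c - a) (c - b) c x = ₂F₁ a b c x * ₂F₁ (c - a - b) c c x := by
    simp only [ordinaryHypergeometric_eq_tsum_coefficient]
    rw [tsum_mul_tsum_eq_tsum_sum_antidiagonal_of_summable_norm
      (summable_norm_ordinaryHypergeometricCoefficient_mul_pow a b c hx)
      (summable_norm_ordinaryHypergeometricCoefficient_mul_pow (c - a - b) c c hx)]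
    refine tsum_congr fun n => ?_
    rw [← sum_antidiagonal_ordinaryHypergeometricCoefficient hc, Finset.sum_mul]
    refine Finset.sum_congr rfl fun p hp => ?_
    rw [← mem_antidiagonal.1 hp]
    ring
  have hpos : 0 < 1 - x := sub_pos.2 (abs_lt.1 hx).2
  rw [hconv, ordinaryHypergeometric_self_right _ hc hx, mul_left_comm, ← rpow_add hpos,
    add_neg_cancel, rpow_zero, mul_one]

lemma ordinaryHypergeometricCoefficient_pos {a b c : ℝ} (ha : 0 < a) (hb : 0 < b) (hc : 0 < c)
    (n : ℕ) : 0 < ordinaryHypergeometricCoefficient a b c n := by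
  have := ascPochhammer_pos n a ha
  have := ascPochhammer_pos n b hb
  have := ascPochhammer_pos n c hc
  positivity

/-! ### Gamma and beta integrals -/

lemma ne_neg_natCast_of_pos {x : ℝ} (hx : 0 < x) (k : ℕ) : x ≠ -k :=
  ((neg_nonpos.2 k.cast_nonneg).trans_lt hx).ne'

lemma Gamma_add_natCast {x : ℝ} (hx : ∀ k : ℕ, x ≠ -k) (n : ℕ) :
    Gamma (x + n) = (ascPochhammer ℝ n).eval x * Gamma x := by
  induction n with
  | zero => simp
  | succ n ih =>
    have hxn : x + n ≠ 0 := fun h => hx n (eq_neg_of_add_eq_zero_left h)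
    rw [Nat.cast_succ, ← add_assoc, Gamma_add_one hxn, ih, ascPochhammer_succ_eval]
    ring

lemma Gamma_add_natCast_mul_div_eq_ordinaryHypergeometricCoefficient {a b c : ℝ}
    (ha : ∀ k : ℕ, a ≠ -k) (hb : ∀ k : ℕ, b ≠ -k) (hc : ∀ k : ℕ, c ≠ -k) (n : ℕ) :
    Gamma (a + n) * Gamma (b + n) / (n ! * Gamma (c + n)) =
      Gamma a * Gamma b / Gamma c * ordinaryHypergeometricCoefficient a b c n := by
  rw [Gamma_add_natCast ha, Gamma_add_natCast hb, Gamma_add_natCast hc,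
    ordinaryHypergeometricCoefficient]
  ring

lemma factorial_two_mul_eq_mul_doubleFactorial (k : ℕ) :
    (2 * k)! = 2 ^ k * k ! * (2 * k - 1)‼ := by
  cases k with
  | zero => simp
  | succ k =>
    rw [← Nat.doubleFactorial_two_mul]
    exact Nat.factorial_eq_mul_doubleFactorial (2 * k + 1)

lemma four_pow_div_factorial_mul_beta_add_half (k : ℕ) (q : ℝ) :
    4 ^ k / (2 * k)! * beta (k + 1 / 2) q = √π * Gamma q / (k ! * Gamma (k + 1 / 2 + q)) := by
  have hfour : (4 : ℝ) ^ k = 2 ^ k * 2 ^ k := by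
    rw [← mul_pow]
    norm_num
  rw [beta, Gamma_nat_add_half, factorial_two_mul_eq_mul_doubleFactorial, hfour]
  push_cast
  field_simp

lemma lintegral_rpow_mul_exp_neg_mul_Ioi {p r : ℝ} (hp : 0 < p) (hr : 0 < r) :
    ∫⁻ x in Ioi 0, ENNReal.ofReal (x ^ (p - 1) * exp (-(r * x))) =
      ENNReal.ofReal (r ^ (-p) * Gamma p) := by
  have hint := integral_rpow_mul_exp_neg_mul_Ioi hp hr
  rw [one_div, inv_rpow hr.le, ← rpow_neg hr.le] at hint
  have hpos : 0 < r ^ (-p) * Gamma p := by positivity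
  rw [← hint, ofReal_integral_eq_lintegral_ofReal (.of_integral_ne_zero (hint ▸ hpos.ne'))]
  exact ae_restrict_of_forall_mem measurableSet_Ioi fun x (hx : 0 < x) => by
    simp only [Pi.zero_apply]; positivity

lemma lintegral_rpow_mul_one_sub_rpow_Ioo {p q : ℝ} (hp : 0 < p) (hq : 0 < q) :
    ∫⁻ u in Ioo 0 1, ENNReal.ofReal (u ^ (p - 1) * (1 - u) ^ (q - 1)) =
      ENNReal.ofReal (beta p q) := by
  have hpos := beta_pos hp hq
  have hpdf := lintegral_betaPDF_eq_one hp hq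
  simp only [lintegral_betaPDF, mul_assoc, ENNReal.ofReal_mul (one_div_pos.2 hpos).le] at hpdf
  rw [lintegral_const_mul _ (by fun_prop), one_div, ENNReal.ofReal_inv_of_pos hpos] at hpdf
  rw [ENNReal.eq_inv_of_mul_eq_one_left ((mul_comm _ _).trans hpdf), inv_inv]

lemma image_sq_div_Ioo_zero_sqrt {r : ℝ} (hr : 0 < r) :
    (fun z => z ^ 2 / r) '' Ioo 0 √r = Ioo 0 1 := by
  ext u
  constructor
  · rintro ⟨z, ⟨hz, hzr⟩, rfl⟩
    exact ⟨by positivity, (div_lt_one hr).2 ((lt_sqrt hz.le).1 hzr)⟩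
  · rintro ⟨hu, hu_lt⟩
    refine ⟨√(u * r), ⟨by positivity, sqrt_lt_sqrt (by positivity) ?_⟩, ?_⟩
    · exact mul_lt_of_lt_one_left hr hu_lt
    · simp only [sq_sqrt (mul_pos hu hr).le, mul_div_cancel_right₀ u hr.ne']

lemma lintegral_rpow_mul_sub_sq_rpow_Ioo {p q r : ℝ} (hp : 0 < p) (hq : 0 < q) (hr : 0 < r) :
    ∫⁻ z in Ioo 0 √r, ENNReal.ofReal (2 * z ^ (2 * p - 1) * (r - z ^ 2) ^ (q - 1)) =
      ENNReal.ofReal (r ^ (p + q - 1) * beta p q) := by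
  have hderiv : ∀ z ∈ Ioo 0 √r,
      HasDerivWithinAt (fun z : ℝ => z ^ 2 / r) (2 * z / r) (Ioo 0 √r) z := fun z _ => by
    simpa using ((hasDerivAt_pow 2 z).div_const r).hasDerivWithinAt
  have hmono : MonotoneOn (fun z : ℝ => z ^ 2 / r) (Ioo 0 √r) := fun x hx y _ hxy => by
    have := hx.1
    dsimp only
    gcongr
  rw [ENNReal.ofReal_mul (by positivity), ← lintegral_rpow_mul_one_sub_rpow_Ioo hp hq,
    ← image_sq_div_Ioo_zero_sqrt hr,
    lintegral_image_eq_lintegral_deriv_mul_of_monotoneOn measurableSet_Ioo hderiv hmono,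
    ← lintegral_const_mul _ (by fun_prop)]
  refine setLIntegral_congr_fun measurableSet_Ioo fun z ⟨hz, hzr⟩ => ?_
  have hsub : 0 < r - z ^ 2 := sub_pos.2 ((lt_sqrt hz.le).1 hzr)
  have hz_pow : (z ^ 2) ^ (p - 1) * z = z ^ (2 * p - 1) := by
    rw [← rpow_natCast_mul hz.le, ← rpow_add_one hz.ne']
    congr 1
    push_cast
    ring
  have hr_pow : r ^ (p + q - 1) = r ^ (p - 1) * r ^ (q - 1) * r := by
    rw [← rpow_add hr, ← rpow_add_one hr.ne']
    ring_nf
  rw [← ENNReal.ofReal_mul (by positivity), ← ENNReal.ofReal_mul (by positivity),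
    one_sub_div hr.ne', div_rpow (by positivity) hr.le, div_rpow hsub.le hr.le, hr_pow, ← hz_pow]
  congr 1
  field_simp

lemma setLIntegral_Ioo_neg_self {f : ℝ → ℝ≥0∞} (hf : Measurable f) (r : ℝ) :
    ∫⁻ z in Ioo (-r) r, f z = ∫⁻ z in Ioo 0 r, (f z + f (-z)) := by
  have hpos : ∫⁻ z in Ioo (-r) r ∩ Ioi 0, f z = ∫⁻ z in Ioo 0 r, f z := by
    congr 2
    ext z
    simp only [mem_inter_iff, mem_Ioo, mem_Ioi]
    grind
  have hneg : ∫⁻ z in Ioo (-r) r \ Ioi 0, f z = ∫⁻ z in Ioo 0 r, f (-z) := by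
    have hpre : Neg.neg ⁻¹' (Ioo (-r) r \ Ioi 0) = Ico 0 r := by
      ext z
      simp only [mem_preimage, mem_sdiff, mem_Ioo, mem_Ioi, mem_Ico]
      grind
    rw [← (Measure.measurePreserving_neg volume).setLIntegral_comp_preimage
      (measurableSet_Ioo.diff measurableSet_Ioi) hf, hpre, setLIntegral_congr Ioo_ae_eq_Ico]
  rw [← lintegral_inter_add_sdiff f _ measurableSet_Ioi, hpos, hneg, lintegral_add_left hf]

lemma hasSum_cosh_two_mul (t : ℝ) :
    HasSum (fun k : ℕ => 4 ^ k / (2 * k)! * (t ^ 2) ^ k) (cosh (2 * t)) := by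
  refine (hasSum_cosh (2 * t)).congr_fun fun k => ?_
  rw [pow_mul, mul_pow, mul_pow]
  norm_num
  ring

lemma ofReal_mul_exp_add_mul_exp_neg {w : ℝ} (hw : 0 ≤ w) (t : ℝ) :
    ENNReal.ofReal (w * exp (-(2 * t))) + ENNReal.ofReal (w * exp (2 * t)) =
      ∑' k : ℕ, ENNReal.ofReal (4 ^ k / (2 * k)! * (t ^ 2) ^ k * (2 * w)) := by
  have hseries := (hasSum_cosh_two_mul t).mul_right (2 * w)
  rw [← ENNReal.ofReal_tsum_of_nonneg (fun k => by positivity) hseries.summable, hseries.tsum_eq,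
    ← ENNReal.ofReal_add (by positivity) (by positivity), cosh_eq]
  ring_nf

lemma lintegral_sub_sq_rpow_mul_exp_Ioo {q r : ℝ} (hq : 0 < q) (hr : 0 < r) (c : ℝ) :
    ∫⁻ z in Ioo (-√r) √r, ENNReal.ofReal ((r - z ^ 2) ^ (q - 1) * exp (-(2 * c * z))) =
      ∑' k : ℕ, ENNReal.ofReal (√π * Gamma q * (c ^ 2) ^ k /
        (k ! * Gamma (k + 1 / 2 + q)) * r ^ (k + 1 / 2 + q - 1)) := by
  have hfold : ∀ z ∈ Ioo 0 √r, ENNReal.ofReal ((r - z ^ 2) ^ (q - 1) * exp (-(2 * c * z))) +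
      ENNReal.ofReal ((r - (-z) ^ 2) ^ (q - 1) * exp (-(2 * c * -z))) =
        ∑' k : ℕ, ENNReal.ofReal (4 ^ k / (2 * k)! * (c ^ 2) ^ k) *
          ENNReal.ofReal (2 * z ^ (2 * (k + 1 / 2 : ℝ) - 1) * (r - z ^ 2) ^ (q - 1)) := by
    intro z ⟨hz, hzr⟩
    have hsub : 0 ≤ r - z ^ 2 := sub_nonneg.2 ((lt_sqrt hz.le).1 hzr).le
    rw [neg_sq, mul_neg, neg_neg, mul_assoc 2 c z,
      ofReal_mul_exp_add_mul_exp_neg (rpow_nonneg hsub _)]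
    refine tsum_congr fun k => ?_
    have hpow : z ^ (2 * (k + 1 / 2 : ℝ) - 1) = (z ^ 2) ^ k := by
      rw [← pow_mul, ← rpow_natCast]
      congr 1
      push_cast
      ring
    rw [← ENNReal.ofReal_mul (by positivity), hpow, mul_pow, mul_pow]
    ring_nf
  rw [setLIntegral_Ioo_neg_self (by fun_prop), setLIntegral_congr_fun measurableSet_Ioo hfold,
    lintegral_tsum fun k => by fun_prop]
  refine tsum_congr fun k => ?_
  rw [lintegral_const_mul _ (by fun_prop),
    lintegral_rpow_mul_sub_sq_rpow_Ioo (by positivity) hq hr, ← ENNReal.ofReal_mul (by positivity)]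
  congr 1
  linear_combination
    (c ^ 2) ^ k * r ^ (k + 1 / 2 + q - 1) * four_pow_div_factorial_mul_beta_add_half k q

/-! ### Integration over the cone of positive definite matrices -/

lemma lintegral_lintegral_tsum_mul {X Y ι : Type*} [MeasurableSpace X] [MeasurableSpace Y]
    [Countable ι] {μ : Measure X} {ν : Measure Y} {f : ι → X → ℝ≥0∞} {g : ι → Y → ℝ≥0∞}
    (hf : ∀ i, Measurable (f i)) (hg : ∀ i, Measurable (g i)) :
    ∫⁻ x, ∫⁻ y, ∑' i, f i x * g i y ∂ν ∂μ = ∑' i, (∫⁻ x, f i x ∂μ) * ∫⁻ y, g i y ∂ν := by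
  have hinner : ∀ x, ∫⁻ y, ∑' i, f i x * g i y ∂ν = ∑' i, f i x * ∫⁻ y, g i y ∂ν := fun x => by
    rw [lintegral_tsum fun i => ((hg i).const_mul _).aemeasurable]
    exact tsum_congr fun i => lintegral_const_mul _ (hg i)
  simp only [hinner]
  rw [lintegral_tsum fun i => ((hf i).mul_const _).aemeasurable]
  exact tsum_congr fun i => lintegral_mul_const _ (hf i)

/-- The cone of positive definite matrices `[[x, z], [z, y]]` in the coordinates `(x, y, z)`. -/
def posDefCone : Set (ℝ × ℝ × ℝ) :=
  {q | 0 < q.1 ∧ 0 < q.2.1 ∧ 0 < q.1 * q.2.1 - q.2.2 ^ 2}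

lemma measurableSet_posDefCone : MeasurableSet posDefCone := by
  unfold posDefCone
  measurability

lemma indicator_posDefCone (f : ℝ × ℝ × ℝ → ℝ≥0∞) (x y z : ℝ) :
    posDefCone.indicator f (x, y, z) =
      (Ioi 0).indicator (fun x => (Ioi 0).indicator (fun y =>
        (Ioo (-√(x * y)) √(x * y)).indicator (fun z => f (x, y, z)) z) y) x := by
  simp only [indicator_apply, posDefCone, mem_ofPred_eq, mem_Ioi, mem_Ioo, sub_pos, sq_lt]
  split_ifs <;> tauto

lemma lintegral_indicator_left {X Y : Type*} [MeasurableSpace Y] {ν : Measure Y} (s : Set X)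
    (f : X → Y → ℝ≥0∞) (x : X) :
    ∫⁻ y, s.indicator (fun x => f x y) x ∂ν = s.indicator (fun x => ∫⁻ y, f x y ∂ν) x := by
  by_cases hx : x ∈ s <;> simp [hx]

lemma setLIntegral_posDefCone {f : ℝ × ℝ × ℝ → ℝ≥0∞} (hf : Measurable f) :
    ∫⁻ p in posDefCone, f p =
      ∫⁻ x in Ioi 0, ∫⁻ y in Ioi 0, ∫⁻ z in Ioo (-√(x * y)) √(x * y), f (x, y, z) := by
  have hind := hf.indicator measurableSet_posDefCone
  rw [← lintegral_indicator measurableSet_posDefCone, Measure.volume_eq_prod,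
    lintegral_prod _ hind.aemeasurable, ← lintegral_indicator measurableSet_Ioi]
  refine lintegral_congr fun x => ?_
  rw [Measure.volume_eq_prod,
    lintegral_prod (fun p => posDefCone.indicator f (x, p)) (by fun_prop)]
  simp only [indicator_posDefCone, lintegral_indicator_left, lintegral_indicator measurableSet_Ioo,
    lintegral_indicator measurableSet_Ioi]

/-- The integrand `x ^ ν₁ * y ^ ν₂` times the unnormalized density of the bivariate Wishart
distribution with `α` degrees of freedom and scale matrix `Σ` given by `Σ⁻¹ / 2 = [[a, c], [c, b]]`,
at the point `p = (x, y, z)`. -/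
noncomputable def wishartMomentIntegrand (α a b c ν₁ ν₂ : ℝ) (p : ℝ × ℝ × ℝ) : ℝ :=
  p.1 ^ ν₁ * p.2.1 ^ ν₂ * (p.1 * p.2.1 - p.2.2 ^ 2) ^ ((α - 3) / 2) *
    exp (-(a * p.1 + b * p.2.1 + 2 * c * p.2.2))

lemma measurable_wishartMomentIntegrand (α a b c ν₁ ν₂ : ℝ) :
    Measurable (wishartMomentIntegrand α a b c ν₁ ν₂) := by
  unfold wishartMomentIntegrand
  fun_prop

lemma wishartMomentIntegrand_nonneg {α a b c ν₁ ν₂ : ℝ} {p : ℝ × ℝ × ℝ} (hp : p ∈ posDefCone) :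
    0 ≤ wishartMomentIntegrand α a b c ν₁ ν₂ p := by
  obtain ⟨hx, hy, hdet⟩ := hp
  unfold wishartMomentIntegrand
  positivity

section Wishart

variable {α a b c ν₁ ν₂ : ℝ}

lemma lintegral_wishartMomentIntegrand_offDiagonal {x y : ℝ} (hα : 1 < α) (hx : 0 < x)
    (hy : 0 < y) :
    ∫⁻ z in Ioo (-√(x * y)) √(x * y),
        ENNReal.ofReal (wishartMomentIntegrand α a b c ν₁ ν₂ (x, y, z)) =
      ∑' k : ℕ, ENNReal.ofReal (√π * Gamma ((α - 1) / 2) * (c ^ 2) ^ k /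
        (k ! * Gamma (α / 2 + k))) *
          ENNReal.ofReal (x ^ (α / 2 + ν₁ + k - 1) * exp (-(a * x))) *
          ENNReal.ofReal (y ^ (α / 2 + ν₂ + k - 1) * exp (-(b * y))) := by
  have hfactor : ∀ z, ENNReal.ofReal (wishartMomentIntegrand α a b c ν₁ ν₂ (x, y, z)) =
      ENNReal.ofReal (x ^ ν₁ * exp (-(a * x)) * (y ^ ν₂ * exp (-(b * y)))) *
        ENNReal.ofReal ((x * y - z ^ 2) ^ ((α - 1) / 2 - 1) * exp (-(2 * c * z))) := by
    intro z
    rw [← ENNReal.ofReal_mul (by positivity), wishartMomentIntegrand, neg_add, neg_add, exp_add,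
      exp_add, show (α - 3) / 2 = (α - 1) / 2 - 1 by ring]
    ring_nf
  simp only [hfactor]
  rw [lintegral_const_mul _ (by fun_prop),
    lintegral_sub_sq_rpow_mul_exp_Ioo (by linarith) (mul_pos hx hy), ← ENNReal.tsum_mul_left]
  refine tsum_congr fun k => ?_
  have hC : 0 ≤ √π * Gamma ((α - 1) / 2) * (c ^ 2) ^ k / (k ! * Gamma (α / 2 + k)) := by
    have := Gamma_pos_of_pos (show 0 < (α - 1) / 2 by linarith)
    positivity
  have hpow : ∀ {w : ℝ} (ν : ℝ), 0 < w →
      w ^ (α / 2 + ν + k - 1) = w ^ ν * w ^ (α / 2 + k - 1) := fun ν hw => by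
    rw [← rpow_add hw]
    ring_nf
  rw [← ENNReal.ofReal_mul (by positivity), ← ENNReal.ofReal_mul hC,
    ← ENNReal.ofReal_mul (by positivity), hpow ν₁ hx, hpow ν₂ hy,
    show (k : ℝ) + 1 / 2 + (α - 1) / 2 = α / 2 + k by ring, mul_rpow hx.le hy.le]
  ring_nf

lemma setLIntegral_wishartMomentIntegrand (hα : 1 < α) (ha : 0 < a) (hb : 0 < b)
    (hν₁ : -α / 2 < ν₁) (hν₂ : -α / 2 < ν₂) :
    ∫⁻ p in posDefCone, ENNReal.ofReal (wishartMomentIntegrand α a b c ν₁ ν₂ p) =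
      ∑' k : ℕ, ENNReal.ofReal (√π * Gamma ((α - 1) / 2) * (c ^ 2) ^ k /
        (k ! * Gamma (α / 2 + k)) *
        (a ^ (-(α / 2 + ν₁ + k)) * Gamma (α / 2 + ν₁ + k)) *
        (b ^ (-(α / 2 + ν₂ + k)) * Gamma (α / 2 + ν₂ + k))) := by
  rw [setLIntegral_posDefCone (measurable_wishartMomentIntegrand α a b c ν₁ ν₂).ennreal_ofReal,
    setLIntegral_congr_fun measurableSet_Ioi fun x hx =>
      setLIntegral_congr_fun measurableSet_Ioi fun y hy =>
        lintegral_wishartMomentIntegrand_offDiagonal hα hx hy,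
    lintegral_lintegral_tsum_mul (fun k => by fun_prop) (fun k => by fun_prop)]
  refine tsum_congr fun k => ?_
  have : (0 : ℝ) ≤ k := k.cast_nonneg
  have hΓ₁ := Gamma_pos_of_pos (show 0 < α / 2 + ν₁ + k by linarith)
  have hΓ₂ := Gamma_pos_of_pos (show 0 < α / 2 + ν₂ + k by linarith)
  rw [lintegral_const_mul _ (by fun_prop), lintegral_rpow_mul_exp_neg_mul_Ioi (by linarith) ha,
    lintegral_rpow_mul_exp_neg_mul_Ioi (by linarith) hb, ← ENNReal.ofReal_mul' (by positivity),
    ← ENNReal.ofReal_mul' (by positivity)]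

lemma wishartMoment_term_eq_coefficient_mul_pow (hα : 0 < α) (ha : 0 < a) (hb : 0 < b)
    (hν₁ : -α / 2 < ν₁) (hν₂ : -α / 2 < ν₂) (k : ℕ) :
    √π * Gamma ((α - 1) / 2) * (c ^ 2) ^ k / (k ! * Gamma (α / 2 + k)) *
        (a ^ (-(α / 2 + ν₁ + k)) * Gamma (α / 2 + ν₁ + k)) *
        (b ^ (-(α / 2 + ν₂ + k)) * Gamma (α / 2 + ν₂ + k)) =
      √π * Gamma ((α - 1) / 2) * (Gamma (α / 2 + ν₁) * Gamma (α / 2 + ν₂) / Gamma (α / 2)) *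
        (a ^ (-(α / 2 + ν₁)) * b ^ (-(α / 2 + ν₂))) *
        (ordinaryHypergeometricCoefficient (α / 2 + ν₁) (α / 2 + ν₂) (α / 2) k *
          (c ^ 2 / (a * b)) ^ k) := by
  have hΓ := Gamma_add_natCast_mul_div_eq_ordinaryHypergeometricCoefficient
    (ne_neg_natCast_of_pos (show 0 < α / 2 + ν₁ by linarith))
    (ne_neg_natCast_of_pos (show 0 < α / 2 + ν₂ by linarith))
    (ne_neg_natCast_of_pos (half_pos hα)) k
  rw [neg_add' _ (k : ℝ), neg_add' _ (k : ℝ), rpow_sub_natCast ha.ne', rpow_sub_natCast hb.ne']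
  linear_combination √π * Gamma ((α - 1) / 2) * (a ^ (-(α / 2 + ν₁)) * b ^ (-(α / 2 + ν₂))) *
    (c ^ 2 / (a * b)) ^ k * hΓ

lemma abs_sq_div_mul_lt_one (hdet : 0 < a * b - c ^ 2) : |c ^ 2 / (a * b)| < 1 := by
  have hlt : c ^ 2 < a * b := sub_pos.1 hdet
  have hab : 0 < a * b := (sq_nonneg c).trans_lt hlt
  rwa [abs_of_nonneg (by positivity), div_lt_one hab]

theorem integral_wishartMomentIntegrand (hα : 1 < α) (ha : 0 < a) (hdet : 0 < a * b - c ^ 2)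
    (hν₁ : -α / 2 < ν₁) (hν₂ : -α / 2 < ν₂) :
    ∫ p in posDefCone, wishartMomentIntegrand α a b c ν₁ ν₂ p =
      √π * Gamma ((α - 1) / 2) * (Gamma (α / 2 + ν₁) * Gamma (α / 2 + ν₂) / Gamma (α / 2)) *
        (a ^ (-(α / 2 + ν₁)) * b ^ (-(α / 2 + ν₂))) *
        ₂F₁ (α / 2 + ν₁) (α / 2 + ν₂) (α / 2) (c ^ 2 / (a * b)) := by
  have hb : 0 < b := pos_of_mul_pos_right ((sq_nonneg c).trans_lt (sub_pos.1 hdet)) ha.le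
  have hα₀ : 0 < α / 2 := by linarith
  have hα₁ : 0 < α / 2 + ν₁ := by linarith
  have hα₂ : 0 < α / 2 + ν₂ := by linarith
  have := Gamma_pos_of_pos (show 0 < (α - 1) / 2 by linarith)
  rw [integral_eq_lintegral_of_nonneg_ae
      (ae_restrict_of_forall_mem measurableSet_posDefCone fun p => wishartMomentIntegrand_nonneg)
      (measurable_wishartMomentIntegrand α a b c ν₁ ν₂).aestronglyMeasurable,
    setLIntegral_wishartMomentIntegrand hα ha hb hν₁ hν₂]
  simp only [wishartMoment_term_eq_coefficient_mul_pow (one_pos.trans hα) ha hb hν₁ hν₂]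
  have hterm : ∀ k, 0 ≤ ordinaryHypergeometricCoefficient (α / 2 + ν₁) (α / 2 + ν₂) (α / 2) k *
      (c ^ 2 / (a * b)) ^ k := fun k => by
    have := ordinaryHypergeometricCoefficient_pos hα₁ hα₂ hα₀ k
    positivity
  have hsum := summable_norm_ordinaryHypergeometricCoefficient_mul_pow (α / 2 + ν₁) (α / 2 + ν₂)
    (α / 2) (abs_sq_div_mul_lt_one hdet)
  rw [← ENNReal.ofReal_tsum_of_nonneg (fun k => mul_nonneg (by positivity) (hterm k))
      (hsum.of_norm.mul_left _),
    tsum_mul_left, ENNReal.toReal_ofReal (mul_nonneg (by positivity) (tsum_nonneg hterm)),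
    ordinaryHypergeometric_eq_tsum_coefficient]

end Wishart

lemma rpow_mul_rpow_mul_div_rpow {a b d : ℝ} (ha : 0 < a) (hb : 0 < b) (hd : 0 < d) (h μ ν : ℝ) :
    a ^ (-(h + μ)) * b ^ (-(h + ν)) * (d / (a * b)) ^ (-(h + μ + ν)) =
      b ^ μ * a ^ ν * d ^ (-(h + μ + ν)) := by
  have ha_pow : a ^ (-(h + μ)) = a ^ ν * a ^ (-(h + μ + ν)) := by
    rw [← rpow_add ha]
    ring_nf
  have hb_pow : b ^ (-(h + ν)) = b ^ μ * b ^ (-(h + μ + ν)) := by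
    rw [← rpow_add hb]
    ring_nf
  rw [ha_pow, hb_pow, div_rpow hd.le (by positivity), mul_rpow ha.le hb.le]
  field_simp

/-- Explicit Wishart moment formula for the product of the two diagonal entries of
a bivariate (`2×2`) Wishart random matrix, expressed as a Lebesgue integral over
`D = {(x,y,z) : x > 0, y > 0, xy − z² > 0}`:
`∫_D x^{ν₁} y^{ν₂} (xy−z²)^{(α−3)/2} e^{−(ax+by+2cz)}`
`= √π Γ((α−1)/2) (Γ(α/2+ν₁)Γ(α/2+ν₂)/Γ(α/2)) b^{ν₁} a^{ν₂} (ab−c²)^{−(α/2+ν₁+ν₂)}`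
`· ₂F₁(−ν₁, −ν₂; α/2; c²/(ab))`. -/
theorem wishart_product_moment_2x2 (α a b c ν₁ ν₂ : ℝ)
    (hα : 1 < α) (ha : 0 < a) (hdet : 0 < a * b - c ^ 2)
    (hν₁ : -α / 2 < ν₁) (hν₂ : -α / 2 < ν₂) :
    (∫ p in {q : ℝ × ℝ × ℝ | 0 < q.1 ∧ 0 < q.2.1 ∧ 0 < q.1 * q.2.1 - q.2.2 ^ 2},
        p.1 ^ ν₁ * p.2.1 ^ ν₂ * (p.1 * p.2.1 - p.2.2 ^ 2) ^ ((α - 3) / 2) *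
          Real.exp (-(a * p.1 + b * p.2.1 + 2 * c * p.2.2))) =
      Real.sqrt π * Real.Gamma ((α - 1) / 2) *
        (Real.Gamma (α / 2 + ν₁) * Real.Gamma (α / 2 + ν₂) / Real.Gamma (α / 2)) *
        b ^ ν₁ * a ^ ν₂ * (a * b - c ^ 2) ^ (-(α / 2 + ν₁ + ν₂)) *
        ∑' k : ℕ, (ascPochhammer ℝ k).eval (-ν₁) * (ascPochhammer ℝ k).eval (-ν₂) /
            ((ascPochhammer ℝ k).eval (α / 2) * (k.factorial : ℝ)) *
          (c ^ 2 / (a * b)) ^ k := by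
  have hab : 0 < a * b := (sq_nonneg c).trans_lt (sub_pos.1 hdet)
  have hseries : ∑' k : ℕ, (ascPochhammer ℝ k).eval (-ν₁) * (ascPochhammer ℝ k).eval (-ν₂) /
      ((ascPochhammer ℝ k).eval (α / 2) * (k.factorial : ℝ)) * (c ^ 2 / (a * b)) ^ k =
        ₂F₁ (-ν₁) (-ν₂) (α / 2) (c ^ 2 / (a * b)) := by
    rw [ordinaryHypergeometric_eq_tsum_coefficient]
    exact tsum_congr fun k => by ring
  have heuler := ordinaryHypergeometric_euler (α / 2 + ν₁) (α / 2 + ν₂)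
    (ne_neg_natCast_of_pos (show 0 < α / 2 by linarith)) (abs_sq_div_mul_lt_one hdet)
  have hpow := rpow_mul_rpow_mul_div_rpow ha (pos_of_mul_pos_right hab ha.le) hdet (α / 2) ν₁ ν₂
  refine (integral_wishartMomentIntegrand hα ha hdet hν₁ hν₂).trans ?_
  rw [heuler, hseries, sub_add_cancel_left, sub_add_cancel_left, one_sub_div hab.ne',
    show -ν₁ - (α / 2 + ν₂) = -(α / 2 + ν₁ + ν₂) by ring]
  linear_combination √π * Gamma ((α - 1) / 2) *
    (Gamma (α / 2 + ν₁) * Gamma (α / 2 + ν₂) / Gamma (α / 2)) *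
    ₂F₁ (-ν₁) (-ν₂) (α / 2) (c ^ 2 / (a * b)) * hpow
end

section
/- For every real numbers a, b ≥ 0, c > 0, natural number k ≥ 1, and with the ascending factorial notation, the term-splitting identity and bound hold: (c+a)_k (c+b)_k = ∏_{j=1}^k {(c+j−1)(c+j−1+a+b) + ab}, and consequently for every nonzero partition-type exponent this product is bounded below by (c)_k (c+a+b)_k + (ab)^k; equivalently, the ratio satisfies (c+a)_k (c+b)_k / (c)_k ≥ (c+a+b)_k + (ab)^k / (c)_k. -/
open Polynomial Finset

/-! The identity `(z + x) * (z + y) = z * (z + x + y) + x * y` at `z = c + j` writes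
`(c + a)_k (c + b)_k` as a product of factors `(c + j) * (c + j + a + b) + a * b`, whose first
summands multiply to `(c)_k (c + a + b)_k`. When all summands are nonnegative, keeping only the two
extreme terms of the expanded product gives the bound. -/

section CommSemiring

variable {R : Type*} [CommSemiring R]

theorem ascPochhammer_eval_eq_prod_range_s16 (k : ℕ) (t : R) :
    (ascPochhammer R k).eval t = ∏ j ∈ range k, (t + j) := by
  induction k with
  | zero => simp
  | succ k ih => rw [ascPochhammer_succ_eval, prod_range_succ, ih]

theorem ascPochhammer_eval_mul_eval_eq_prod_range (k : ℕ) (s t : R) :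
    (ascPochhammer R k).eval s * (ascPochhammer R k).eval t =
      ∏ j ∈ range k, (s + j) * (t + j) := by
  simp only [ascPochhammer_eval_eq_prod_range_s16, prod_mul_distrib]

theorem ascPochhammer_eval_add_mul_eval_add (k : ℕ) (a b c : R) :
    (ascPochhammer R k).eval (c + a) * (ascPochhammer R k).eval (c + b) =
      ∏ j ∈ range k, ((c + j) * (c + j + a + b) + a * b) := by
  rw [ascPochhammer_eval_mul_eval_eq_prod_range]
  exact prod_congr rfl fun j _ => by ring

variable [PartialOrder R] [IsOrderedRing R]

theorem ascPochhammer_eval_mul_eval_add_pow_le {a b c : R} (hab : 0 ≤ a * b) (hc : 0 ≤ c)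
    (hcab : 0 ≤ c + a + b) {k : ℕ} (hk : k ≠ 0) :
    (ascPochhammer R k).eval c * (ascPochhammer R k).eval (c + a + b) + (a * b) ^ k ≤
      (ascPochhammer R k).eval (c + a) * (ascPochhammer R k).eval (c + b) := by
  have term_nonneg (j : ℕ) : 0 ≤ (c + j) * (c + a + b + j) := by positivity
  have shift_comm (j : ℕ) : c + j + a + b = c + a + b + j := by ring
  have pow_eq_prod : (a * b) ^ k = ∏ _j ∈ range k, a * b := by simp only [prod_const, card_range]
  simp only [ascPochhammer_eval_add_mul_eval_add, shift_comm]
  rw [ascPochhammer_eval_mul_eval_eq_prod_range, pow_eq_prod]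
  exact prod_add_prod_le (mem_range.2 hk.pos) le_rfl
    (fun j _ _ => le_add_of_nonneg_right hab)
    (fun j _ _ => le_add_of_nonneg_left (term_nonneg j))
    (fun j _ => term_nonneg j) (fun _ _ => hab)

end CommSemiring

theorem ascFactorial_splitting_identity_and_bound_general {K : Type*} [Field K] [LinearOrder K]
    [IsStrictOrderedRing K] (a b c : K) (hab : 0 ≤ a * b) (hc : 0 < c) (hcab : 0 ≤ c + a + b)
    (k : ℕ) (hk : 1 ≤ k) :
    (ascPochhammer K k).eval (c + a) * (ascPochhammer K k).eval (c + b) =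
        (∏ j ∈ range k, ((c + (j : K)) * (c + (j : K) + a + b) + a * b)) ∧
      (ascPochhammer K k).eval (c + a) * (ascPochhammer K k).eval (c + b) /
          (ascPochhammer K k).eval c ≥
        (ascPochhammer K k).eval (c + a + b) +
          (a * b) ^ k / (ascPochhammer K k).eval c := by
  refine ⟨ascPochhammer_eval_add_mul_eval_add k a b c, ?_⟩
  have hpos : 0 < (ascPochhammer K k).eval c := ascPochhammer_pos k c hc
  rw [ge_iff_le, add_div' _ _ _ hpos.ne', div_le_div_iff_of_pos_right hpos, mul_comm]
  exact ascPochhammer_eval_mul_eval_add_pow_le hab hc.le hcab (Nat.one_le_iff_ne_zero.1 hk)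

/-- Term-splitting identity and bound for ascending factorials: for `a, b ≥ 0`,
`c > 0` and `k ≥ 1`,
`(c+a)_k (c+b)_k = ∏_{j=1}^k {(c+j−1)(c+j−1+a+b) + ab}`, and consequently
`(c+a)_k (c+b)_k / (c)_k ≥ (c+a+b)_k + (ab)^k / (c)_k`. -/
theorem ascFactorial_splitting_identity_and_bound (a b c : ℝ) (ha : 0 ≤ a)
    (hb : 0 ≤ b) (hc : 0 < c) (k : ℕ) (hk : 1 ≤ k) :
    (ascPochhammer ℝ k).eval (c + a) * (ascPochhammer ℝ k).eval (c + b) =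
        (∏ j ∈ range k, ((c + (j : ℝ)) * (c + (j : ℝ) + a + b) + a * b)) ∧
      (ascPochhammer ℝ k).eval (c + a) * (ascPochhammer ℝ k).eval (c + b) /
          (ascPochhammer ℝ k).eval c ≥
        (ascPochhammer ℝ k).eval (c + a + b) +
          (a * b) ^ k / (ascPochhammer ℝ k).eval c := by
  exact ascFactorial_splitting_identity_and_bound_general a b c (mul_nonneg ha hb) hc
    (by positivity) k hk
end
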